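/- arXiv:math/0612568 — 4 statements merged into one kernel-verified Lean document; each statement's English description precedes it below -/
import Mathlib

section
/- Let $a > 0$ and let $j : \mathbb{R} \to \mathbb{R}$ be twice differentiable on $[0,\infty)$ with $j(t) \ge 0$ for all $t \ge 0$, satisfying the differential inequality $j''(t) \ge a^2 j(t)$ for all $t \ge 0$, and with $\lim_{t \to \infty} j(t) = 0$. Then $j(t) \le j(0)\, e^{-a t}$ for all $t \ge 0$. -/
/-!
The operator factors as `D² - a² = (D - a)(D + a)`. With `u = j' + a j` the hypothesis reads
`u' ≥ a u`, so if `u s > 0` at some `s`, then `u t ≥ u s * exp (a (t - s)) ≥ u s * (1 + a (t - s))`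
for `t ≥ s`. The last expression is the value of `D + a` on `u s * (t - s)`, so `j` exceeds this
linear function up to a bounded error and tends to `+∞`. Otherwise `u ≤ 0` throughout, that is
`j' ≤ -a j`, and Grönwall's inequality concludes.
-/

open Set Filter

section Gronwall

variable {f f' : ℝ → ℝ} {k s t : ℝ}

theorem le_mul_exp_of_deriv_le_mul
    (hf : ∀ x ∈ Ici s, HasDerivWithinAt f (f' x) (Ici s) x)
    (hle : ∀ x ∈ Ici s, f' x ≤ k * f x) (hst : s ≤ t) :
    f t ≤ f s * Real.exp (k * (t - s)) := by
  rw [← gronwallBound_ε0]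
  refine le_gronwallBound_of_liminf_deriv_right_le (f' := f') (b := t)
    (fun x hx => (hf x hx.1).continuousWithinAt.mono Icc_subset_Ici_self) (fun x hx r hr => ?_)
    le_rfl (fun x hx => by simpa using hle x hx.1) t (right_mem_Icc.2 hst)
  exact ((hf x hx.1).mono (Ici_subset_Ici.2 hx.1)).liminf_right_slope_le hr

theorem mul_exp_le_of_mul_le_deriv
    (hf : ∀ x ∈ Ici s, HasDerivWithinAt f (f' x) (Ici s) x)
    (hle : ∀ x ∈ Ici s, k * f x ≤ f' x) (hst : s ≤ t) :
    f s * Real.exp (k * (t - s)) ≤ f t := by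
  have hneg := le_mul_exp_of_deriv_le_mul (f := fun x => -f x) (k := k) (fun x hx => (hf x hx).neg)
    (fun x hx => by linarith [hle x hx]) hst
  linarith

end Gronwall

section SecondOrder

variable {a s t : ℝ} {j j' j'' : ℝ → ℝ}

theorem mul_exp_le_deriv_add_mul
    (hj' : ∀ x ∈ Ici s, HasDerivWithinAt j (j' x) (Ici s) x)
    (hj'' : ∀ x ∈ Ici s, HasDerivWithinAt j' (j'' x) (Ici s) x)
    (hineq : ∀ x ∈ Ici s, a ^ 2 * j x ≤ j'' x) (hst : s ≤ t) :
    (j' s + a * j s) * Real.exp (a * (t - s)) ≤ j' t + a * j t :=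
  mul_exp_le_of_mul_le_deriv (f := fun x => j' x + a * j x)
    (fun x hx => (hj'' x hx).add ((hj' x hx).const_mul a))
    (fun x hx => by linarith [hineq x hx]) hst

theorem mul_exp_add_mul_sub_le
    (hj' : ∀ x ∈ Ici s, HasDerivWithinAt j (j' x) (Ici s) x)
    (hj'' : ∀ x ∈ Ici s, HasDerivWithinAt j' (j'' x) (Ici s) x)
    (hineq : ∀ x ∈ Ici s, a ^ 2 * j x ≤ j'' x)
    (hs : 0 ≤ j' s + a * j s) (hst : s ≤ t) :
    j s * Real.exp (-a * (t - s)) + (j' s + a * j s) * (t - s) ≤ j t := by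
  set c := j' s + a * j s
  have hderiv : ∀ x ∈ Ici s,
      HasDerivWithinAt (fun y => j y - c * (y - s)) (j' x - c) (Ici s) x := fun x hx => by
    simpa using (hj' x hx).fun_sub (((hasDerivWithinAt_id x (Ici s)).sub_const s).const_mul c)
  have hbound : ∀ x ∈ Ici s, -a * (j x - c * (x - s)) ≤ j' x - c := fun x hx => by
    have htangent : c * (a * (x - s) + 1) ≤ j' x + a * j x :=
      (mul_le_mul_of_nonneg_left (Real.add_one_le_exp _) hs).trans
        (mul_exp_le_deriv_add_mul hj' hj'' hineq hx)
    linarith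
  have hgrowth := mul_exp_le_of_mul_le_deriv hderiv hbound hst
  simp only [sub_self, mul_zero, sub_zero] at hgrowth
  linarith

theorem tendsto_atTop_of_deriv_add_mul_pos (ha : 0 ≤ a)
    (hj' : ∀ x ∈ Ici s, HasDerivWithinAt j (j' x) (Ici s) x)
    (hj'' : ∀ x ∈ Ici s, HasDerivWithinAt j' (j'' x) (Ici s) x)
    (hineq : ∀ x ∈ Ici s, a ^ 2 * j x ≤ j'' x) (hs : 0 < j' s + a * j s) :
    Tendsto j atTop atTop := by
  have hlinear : Tendsto (fun t => -|j s| + (j' s + a * j s) * (t - s)) atTop atTop :=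
    tendsto_atTop_add_const_left _ _
      ((tendsto_atTop_add_const_right _ (-s) tendsto_id).const_mul_atTop hs)
  refine tendsto_atTop_mono' atTop ?_ hlinear
  filter_upwards [eventually_ge_atTop s] with t hst
  have hexp : Real.exp (-a * (t - s)) ≤ 1 :=
    Real.exp_le_one_iff.2 (mul_nonpos_of_nonpos_of_nonneg (neg_nonpos.2 ha) (sub_nonneg.2 hst))
  have habs : -|j s| ≤ j s * Real.exp (-a * (t - s)) := by
    refine neg_le_of_abs_le ?_
    rw [abs_mul, Real.abs_exp]
    exact mul_le_of_le_one_right (abs_nonneg _) hexp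
  linarith [mul_exp_add_mul_sub_le hj' hj'' hineq hs.le hst]

end SecondOrder

theorem stmt_0_general {a : ℝ} (ha : 0 ≤ a) {j j' j'' : ℝ → ℝ}
    (hj' : ∀ t ∈ Ici 0, HasDerivWithinAt j (j' t) (Ici 0) t)
    (hj'' : ∀ t ∈ Ici 0, HasDerivWithinAt j' (j'' t) (Ici 0) t)
    (hineq : ∀ t ∈ Ici 0, a ^ 2 * j t ≤ j'' t) (hlim : ¬ Tendsto j atTop atTop)
    {t : ℝ} (ht : 0 ≤ t) : j t ≤ j 0 * Real.exp (-a * t) := by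
  have hle : ∀ s ∈ Ici 0, j' s ≤ -a * j s := by
    intro s hs
    by_contra! hpos
    have hsub : Ici s ⊆ Ici 0 := Ici_subset_Ici.2 hs
    exact hlim <| tendsto_atTop_of_deriv_add_mul_pos ha
      (fun x hx => (hj' x (hsub hx)).mono hsub) (fun x hx => (hj'' x (hsub hx)).mono hsub)
      (fun x hx => hineq x (hsub hx)) (by linarith)
  simpa only [sub_zero] using le_mul_exp_of_deriv_le_mul hj' hle ht

/-- Lemma 4.1 (Rauch): if `j ≥ 0` on `[0,∞)`, `j'' ≥ a² j` on `[0,∞)`, and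
`j(t) → 0` as `t → ∞`, then `j(t) ≤ j(0) e^{-a t}` for all `t ≥ 0`. -/
theorem stmt_0 (a : ℝ) (ha : 0 < a) (j j' j'' : ℝ → ℝ)
    (hj' : ∀ t, 0 ≤ t → HasDerivAt j (j' t) t)
    (hj'' : ∀ t, 0 ≤ t → HasDerivAt j' (j'' t) t)
    (hnonneg : ∀ t, 0 ≤ t → 0 ≤ j t)
    (hineq : ∀ t, 0 ≤ t → a ^ 2 * j t ≤ j'' t)
    (hlim : Filter.Tendsto j Filter.atTop (nhds 0)) :
    ∀ t, 0 ≤ t → j t ≤ j 0 * Real.exp (-a * t) :=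
  fun _ => stmt_0_general ha.le (fun t ht => (hj' t ht).hasDerivWithinAt)
    (fun t ht => (hj'' t ht).hasDerivWithinAt) hineq (hlim.not_tendsto (disjoint_nhds_atTop 0))
end

section
/- Let $a > 0$ and let $j : \mathbb{R} \to \mathbb{R}$ be twice differentiable on $[0,\infty)$, satisfying $j''(t) \le a^2 j(t)$ for all $t \ge 0$ and $\lim_{t \to \infty} j(t) = 0$. Then $j(t) \ge j(0)\, e^{-a t}$ for all $t \ge 0$. -/
/-!
The operator `j'' - a² j` factors as `(d/dt - a) (d/dt + a) j`. With `w = j' + a j`, the inequality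
`j'' ≤ a² j` reads `w' ≤ a w`, so `exp (-a t) * w t` is nonincreasing. If `w` were negative
somewhere, then `w t ≤ -c * exp (a t)` from there on for some `c > 0`, and a second integration
gives `j t ≤ -c * t + O(1)`; so `w ≥ 0` unless `j → -∞`. But `w ≥ 0` says that `exp (a t) * j t` is
nondecreasing.
-/

section

open Filter Real Set

variable {a b c t₀ : ℝ} {D : Set ℝ} {f f' j j' j'' : ℝ → ℝ}

lemma hasDerivWithinAt_exp_mul {t y : ℝ} (hf : HasDerivWithinAt f y D t) :
    HasDerivWithinAt (fun x => exp (b * x) * f x) (exp (b * t) * (y + b * f t)) D t := by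
  have hexp : HasDerivWithinAt (fun x => exp (b * x)) (exp (b * t) * b) D t := by
    simpa only [id_eq, mul_one] using ((hasDerivWithinAt_id t D).const_mul b).exp
  exact (hexp.mul hf).congr_deriv (by ring)

lemma monotoneOn_exp_mul (hD : Convex ℝ D) (hf : ∀ t ∈ D, HasDerivWithinAt f (f' t) D t)
    (h : ∀ t ∈ D, 0 ≤ f' t + b * f t) : MonotoneOn (fun t => exp (b * t) * f t) D := by
  have hderiv t (ht : t ∈ D) := hasDerivWithinAt_exp_mul (b := b) (hf t ht)
  exact monotoneOn_of_hasDerivWithinAt_nonneg hD (fun t ht => (hderiv t ht).continuousWithinAt)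
    (fun t ht => (hderiv t (interior_subset ht)).mono interior_subset)
    (fun t ht => mul_nonneg (exp_pos _).le (h t (interior_subset ht)))

lemma antitoneOn_exp_mul (hD : Convex ℝ D) (hf : ∀ t ∈ D, HasDerivWithinAt f (f' t) D t)
    (h : ∀ t ∈ D, f' t + b * f t ≤ 0) : AntitoneOn (fun t => exp (b * t) * f t) D := by
  have hneg : MonotoneOn (fun t => exp (b * t) * -f t) D :=
    monotoneOn_exp_mul hD (fun t ht => (hf t ht).neg) fun t ht => by linarith [h t ht]
  simpa only [mul_neg, neg_neg] using hneg.neg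

lemma antitoneOn_exp_neg_mul_deriv_add (hD : Convex ℝ D)
    (hj' : ∀ t ∈ D, HasDerivWithinAt j (j' t) D t)
    (hj'' : ∀ t ∈ D, HasDerivWithinAt j' (j'' t) D t)
    (hineq : ∀ t ∈ D, j'' t ≤ a ^ 2 * j t) :
    AntitoneOn (fun t => exp (-a * t) * (j' t + a * j t)) D :=
  antitoneOn_exp_mul hD (fun t ht => (hj'' t ht).add ((hj' t ht).const_mul a))
    fun t ht => by linarith [hineq t ht]

lemma tendsto_atBot_of_deriv_add_le_neg_exp (ha : 0 ≤ a) (hc : 0 < c)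
    (hj' : ∀ t ∈ Ici t₀, HasDerivWithinAt j (j' t) (Ici t₀) t)
    (h : ∀ t ∈ Ici t₀, j' t + a * j t ≤ -c * exp (a * t)) : Tendsto j atTop atBot := by
  -- The linear comparison function also serves `a = 0`, unlike `-c / (2 * a) * exp (a * t)`.
  have hanti : AntitoneOn (fun t => exp (a * t) * (j t + c * t)) (Ici t₀) := by
    refine antitoneOn_exp_mul (convex_Ici t₀)
      (fun t ht => (hj' t ht).add ((hasDerivWithinAt_id t _).const_mul c)) fun t ht => ?_
    calc j' t + c * 1 + a * (j t + c * t)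
        = (j' t + a * j t) + c * (a * t + 1) := by ring
      _ ≤ -c * exp (a * t) + c * exp (a * t) := by gcongr; exacts [h t ht, add_one_le_exp _]
      _ = 0 := by ring
  let C := exp (a * t₀) * (j t₀ + c * t₀)
  have hbound : ∀ t, t₀ ≤ t → 0 ≤ t → j t ≤ |C| + -c * t := fun t ht ht0 => by
    have hexp : 1 ≤ exp (a * t) := one_le_exp (mul_nonneg ha ht0)
    have hmul : exp (a * t) * (j t + c * t) ≤ exp (a * t) * |C| :=
      calc exp (a * t) * (j t + c * t) ≤ C := hanti self_mem_Ici ht ht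
        _ ≤ |C| := le_abs_self C
        _ ≤ exp (a * t) * |C| := le_mul_of_one_le_left (abs_nonneg C) hexp
    have hle : j t + c * t ≤ |C| := le_of_mul_le_mul_left hmul (exp_pos _)
    linarith
  refine tendsto_atBot_mono' atTop ?_ (tendsto_atBot_add_const_left atTop |C|
    (tendsto_id.const_mul_atTop_of_neg (neg_lt_zero.2 hc)))
  filter_upwards [eventually_ge_atTop t₀, eventually_ge_atTop 0] using hbound

lemma deriv_add_nonneg_of_not_tendsto_atBot (ha : 0 ≤ a)
    (hj' : ∀ t ∈ Ici t₀, HasDerivWithinAt j (j' t) (Ici t₀) t)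
    (hj'' : ∀ t ∈ Ici t₀, HasDerivWithinAt j' (j'' t) (Ici t₀) t)
    (hineq : ∀ t ∈ Ici t₀, j'' t ≤ a ^ 2 * j t) (hlim : ¬Tendsto j atTop atBot) :
    ∀ t ∈ Ici t₀, 0 ≤ j' t + a * j t := by
  intro s hs
  by_contra! hneg
  have hsub : Ici s ⊆ Ici t₀ := Ici_subset_Ici.2 hs
  refine hlim (tendsto_atBot_of_deriv_add_le_neg_exp (c := -(exp (-a * s) * (j' s + a * j s))) ha
    (neg_pos.2 (mul_neg_of_pos_of_neg (exp_pos _) hneg))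
    (fun t ht => (hj' t (hsub ht)).mono hsub) fun t ht => ?_)
  have hanti := antitoneOn_exp_neg_mul_deriv_add (convex_Ici t₀) hj' hj'' hineq hs (hsub ht) ht
  calc j' t + a * j t = exp (-a * t) * (j' t + a * j t) * exp (a * t) := by
        rw [mul_right_comm, ← exp_add, neg_mul, neg_add_cancel, exp_zero, one_mul]
    _ ≤ exp (-a * s) * (j' s + a * j s) * exp (a * t) := by gcongr
    _ = -(-(exp (-a * s) * (j' s + a * j s))) * exp (a * t) := by rw [neg_neg]

theorem stmt_5_general (ha : 0 ≤ a)
    (hj' : ∀ t ∈ Ici t₀, HasDerivWithinAt j (j' t) (Ici t₀) t)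
    (hj'' : ∀ t ∈ Ici t₀, HasDerivWithinAt j' (j'' t) (Ici t₀) t)
    (hineq : ∀ t ∈ Ici t₀, j'' t ≤ a ^ 2 * j t) (hlim : ¬Tendsto j atTop atBot) :
    ∀ t ∈ Ici t₀, j t₀ * exp (-a * (t - t₀)) ≤ j t := by
  intro t ht
  have hmono : exp (a * t₀) * j t₀ ≤ exp (a * t) * j t :=
    monotoneOn_exp_mul (convex_Ici t₀) hj'
      (deriv_add_nonneg_of_not_tendsto_atBot ha hj' hj'' hineq hlim) self_mem_Ici ht ht
  calc j t₀ * exp (-a * (t - t₀)) = exp (-a * t) * (exp (a * t₀) * j t₀) := by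
        rw [← mul_assoc, ← exp_add, mul_comm]; ring_nf
    _ ≤ exp (-a * t) * (exp (a * t) * j t) := by gcongr
    _ = j t := by rw [← mul_assoc, ← exp_add, neg_mul, neg_add_cancel, exp_zero, one_mul]

end

/-- Scalar analogue of inequality (1): if `j'' ≤ a² j` on `[0,∞)` and `j(t) → 0`
as `t → ∞`, then `j(t) ≥ j(0) e^{-a t}` for all `t ≥ 0`. -/
theorem stmt_5 (a : ℝ) (ha : 0 < a) (j j' j'' : ℝ → ℝ)
    (hj' : ∀ t, 0 ≤ t → HasDerivAt j (j' t) t)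
    (hj'' : ∀ t, 0 ≤ t → HasDerivAt j' (j'' t) t)
    (hineq : ∀ t, 0 ≤ t → j'' t ≤ a ^ 2 * j t)
    (hlim : Filter.Tendsto j Filter.atTop (nhds 0)) :
    ∀ t, 0 ≤ t → j 0 * Real.exp (-a * t) ≤ j t := by
  simpa only [sub_zero, Set.mem_Ici] using stmt_5_general ha.le
    (fun t ht => (hj' t ht).hasDerivWithinAt) (fun t ht => (hj'' t ht).hasDerivWithinAt) hineq
    (hlim.not_tendsto (disjoint_nhds_atBot 0))
end

section
/- Let $a > 0$, let $j : \mathbb{R} \to \mathbb{R}$ be twice differentiable on $[0,\infty)$ with $j(t) > 0$ for all $t \ge 0$, and let $c : \mathbb{R} \to \mathbb{R}$ satisfy $c(t) \ge 0$ for all $t \ge 0$. Suppose $j''(t) = j(t)\,(c(t) + a^2)$ for all $t \ge 0$, $\lim_{t \to \infty} j(t) = 0$, and $j(t) \ge j(0)\, e^{-a t}$ for all $t \ge 0$. Then $j(t) = j(0)\, e^{-a t}$ and $c(t) = 0$ for all $t \ge 0$. -/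
/-!
The difference `u(t) = j(t) - j(0) e^{-at}` is nonnegative, vanishes at `0`, and satisfies
`u'' ≥ a² u ≥ 0`, so it is convex. Being squeezed between `0` and `j`, it grows sublinearly, and a
convex function of sublinear growth cannot increase, because its secant slopes from a fixed point
increase to the limit `0`. Hence `u ≤ u(0) = 0`, so `j` is the exponential, and differentiating
twice gives `j'' = a² j`, which forces `j c = 0`.
-/

open Set Filter Asymptotics

theorem antitoneOn_Ici_of_convexOn_of_isLittleO {b : ℝ} {f : ℝ → ℝ}
    (hf : ConvexOn ℝ (Ici b) f) (hsub : f =o[atTop] (id : ℝ → ℝ)) :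
    AntitoneOn f (Ici b) := by
  intro x hx y hy hxy
  rcases hxy.eq_or_lt with rfl | hlt
  · exact le_rfl
  have slope_le : ∀ᶠ t in atTop, (f y - f x) / (y - x) ≤ (f t - f x) / (t - x) := by
    filter_upwards [eventually_ge_atTop y] with t hyt
    exact hf.secant_mono hx hy (hy.trans hyt) hlt.ne' (hlt.trans_le hyt).ne' hyt
  have tendsto_slope : Tendsto (fun t ↦ (f t - f x) / (t - x)) atTop (nhds 0) := by
    have hid : (id : ℝ → ℝ) =O[atTop] fun t ↦ t - x :=
      (isLittleO_const_id_atTop x).right_isBigO_sub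
    exact ((hsub.sub (isLittleO_const_id_atTop (f x))).trans_isBigO hid).tendsto_div_nhds_zero
  have slope_nonpos : (f y - f x) / (y - x) ≤ 0 := ge_of_tendsto tendsto_slope slope_le
  simpa [div_le_iff₀ (sub_pos.2 hlt)] using slope_nonpos

theorem eqOn_Ici_of_le_of_convexOn_sub {b : ℝ} {f g : ℝ → ℝ}
    (hconv : ConvexOn ℝ (Ici b) (f - g)) (hsub : (f - g) =o[atTop] (id : ℝ → ℝ))
    (hb : f b ≤ g b) (hle : ∀ t ∈ Ici b, g t ≤ f t) :
    EqOn f g (Ici b) := by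
  intro t ht
  have h := antitoneOn_Ici_of_convexOn_of_isLittleO hconv hsub self_mem_Ici ht ht
  simp only [Pi.sub_apply] at h
  exact le_antisymm (by linarith) (hle t ht)

theorem eqOn_of_hasDerivWithinAt_of_eqOn {𝕜 E : Type*} [NontriviallyNormedField 𝕜]
    [NormedAddCommGroup E] [NormedSpace 𝕜 E] {s : Set 𝕜} {f g f' g' : 𝕜 → E}
    (hs : UniqueDiffOn 𝕜 s) (hf : ∀ t ∈ s, HasDerivWithinAt f (f' t) s t)
    (hg : ∀ t ∈ s, HasDerivWithinAt g (g' t) s t) (hfg : EqOn f g s) :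
    EqOn f' g' s :=
  fun t ht ↦ (hs t ht).eq_deriv _ (hf t ht) ((hg t ht).congr hfg (hfg ht))

theorem convexOn_of_forall_mem_hasDerivWithinAt2_nonneg {D : Set ℝ} (hD : Convex ℝ D)
    {f f' f'' : ℝ → ℝ} (hf : ∀ t ∈ D, HasDerivWithinAt f (f' t) D t)
    (hf' : ∀ t ∈ D, HasDerivWithinAt f' (f'' t) D t) (hf'' : ∀ t ∈ D, 0 ≤ f'' t) :
    ConvexOn ℝ D f :=
  convexOn_of_hasDerivWithinAt2_nonneg hD
    (fun t ht ↦ (hf t ht).continuousWithinAt)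
    (fun t ht ↦ (hf t (interior_subset ht)).mono interior_subset)
    (fun t ht ↦ (hf' t (interior_subset ht)).mono interior_subset)
    (fun t ht ↦ hf'' t (interior_subset ht))

theorem hasDerivAt_const_mul_exp_mul (C r t : ℝ) :
    HasDerivAt (fun t ↦ C * Real.exp (r * t)) (r * C * Real.exp (r * t)) t := by
  refine (((hasDerivAt_id t).const_mul r).exp.const_mul C).congr_deriv ?_
  simp only [id_eq]
  ring

theorem eqOn_exp_of_sq_mul_le_deriv2 {a : ℝ} {j j' j'' : ℝ → ℝ}
    (hj' : ∀ t ∈ Ici 0, HasDerivWithinAt j (j' t) (Ici 0) t)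
    (hj'' : ∀ t ∈ Ici 0, HasDerivWithinAt j' (j'' t) (Ici 0) t)
    (hj0 : 0 ≤ j 0) (hle : ∀ t ∈ Ici 0, a ^ 2 * j t ≤ j'' t)
    (hsub : j =o[atTop] (id : ℝ → ℝ))
    (hlow : ∀ t ∈ Ici 0, j 0 * Real.exp (-a * t) ≤ j t) :
    EqOn j (fun t ↦ j 0 * Real.exp (-a * t)) (Ici 0) := by
  have hconv : ConvexOn ℝ (Ici 0) (j - fun t ↦ j 0 * Real.exp (-a * t)) := by
    refine convexOn_of_forall_mem_hasDerivWithinAt2_nonneg (convex_Ici 0)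
      (fun t ht ↦ (hj' t ht).sub (hasDerivAt_const_mul_exp_mul _ _ t).hasDerivWithinAt)
      (fun t ht ↦ (hj'' t ht).sub (hasDerivAt_const_mul_exp_mul _ _ t).hasDerivWithinAt)
      fun t ht ↦ sub_nonneg.2 ?_
    calc -a * (-a * j 0) * Real.exp (-a * t) = a ^ 2 * (j 0 * Real.exp (-a * t)) := by ring
      _ ≤ a ^ 2 * j t := by gcongr; exact hlow t ht
      _ ≤ j'' t := hle t ht
  have hsub' : (j - fun t ↦ j 0 * Real.exp (-a * t)) =o[atTop] (id : ℝ → ℝ) := by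
    refine IsBigO.trans_isLittleO (.of_norm_eventuallyLE ?_) hsub.norm_left
    filter_upwards [eventually_ge_atTop 0] with t ht
    have hexp : 0 ≤ j 0 * Real.exp (-a * t) := by positivity
    rw [Pi.sub_apply, Real.norm_of_nonneg (sub_nonneg.2 (hlow t ht))]
    exact (sub_le_self _ hexp).trans (Real.le_norm_self _)
  exact eqOn_Ici_of_le_of_convexOn_sub hconv hsub' (by simp) hlow

theorem stmt_8_general (a : ℝ) (j j' j'' c : ℝ → ℝ)
    (hj' : ∀ t, 0 ≤ t → HasDerivWithinAt j (j' t) (Ici 0) t)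
    (hj'' : ∀ t, 0 ≤ t → HasDerivWithinAt j' (j'' t) (Ici 0) t)
    (hj0 : 0 < j 0)
    (hc : ∀ t, 0 ≤ t → 0 ≤ c t)
    (heq : ∀ t, 0 ≤ t → j'' t = j t * (c t + a ^ 2))
    (hsub : j =o[atTop] (id : ℝ → ℝ))
    (hlow : ∀ t, 0 ≤ t → j 0 * Real.exp (-a * t) ≤ j t) :
    ∀ t, 0 ≤ t → j t = j 0 * Real.exp (-a * t) ∧ c t = 0 := by
  have hpos (t : ℝ) (ht : 0 ≤ t) : 0 < j t := (by positivity : (0 : ℝ) < _).trans_le (hlow t ht)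
  have hle (t : ℝ) (ht : 0 ≤ t) : a ^ 2 * j t ≤ j'' t := by
    linarith [heq t ht, mul_nonneg (hpos t ht).le (hc t ht)]
  have hj : EqOn j (fun t ↦ j 0 * Real.exp (-a * t)) (Ici 0) :=
    eqOn_exp_of_sq_mul_le_deriv2 hj' hj'' hj0.le hle hsub hlow
  have hj'_eq : EqOn j' (fun t ↦ -a * j 0 * Real.exp (-a * t)) (Ici 0) :=
    eqOn_of_hasDerivWithinAt_of_eqOn (uniqueDiffOn_Ici 0) hj'
      (fun t _ ↦ (hasDerivAt_const_mul_exp_mul _ _ t).hasDerivWithinAt) hj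
  have hj''_eq : EqOn j'' (fun t ↦ -a * (-a * j 0) * Real.exp (-a * t)) (Ici 0) :=
    eqOn_of_hasDerivWithinAt_of_eqOn (uniqueDiffOn_Ici 0) hj''
      (fun t _ ↦ (hasDerivAt_const_mul_exp_mul _ _ t).hasDerivWithinAt) hj'_eq
  intro t ht
  have hjc : j t * c t = 0 := by linear_combination hj''_eq ht - heq t ht - a ^ 2 * hj ht
  exact ⟨hj ht, (mul_eq_zero.1 hjc).resolve_left (hpos t ht).ne'⟩

/-- Scalar rigidity: if `j > 0` on `[0,∞)` satisfies `j'' = j (c + a²)` with `c ≥ 0`,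
`j(t) → 0` as `t → ∞`, and `j(t) ≥ j(0) e^{-a t}` on `[0,∞)`, then
`j(t) = j(0) e^{-a t}` and `c(t) = 0` for all `t ≥ 0`. -/
theorem stmt_8 (a : ℝ) (ha : 0 < a) (j j' j'' c : ℝ → ℝ)
    (hj' : ∀ t, 0 ≤ t → HasDerivAt j (j' t) t)
    (hj'' : ∀ t, 0 ≤ t → HasDerivAt j' (j'' t) t)
    (hpos : ∀ t, 0 ≤ t → 0 < j t)
    (hc : ∀ t, 0 ≤ t → 0 ≤ c t)
    (heq : ∀ t, 0 ≤ t → j'' t = j t * (c t + a ^ 2))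
    (hlim : Filter.Tendsto j Filter.atTop (nhds 0))
    (hlow : ∀ t, 0 ≤ t → j 0 * Real.exp (-a * t) ≤ j t) :
    ∀ t, 0 ≤ t → j t = j 0 * Real.exp (-a * t) ∧ c t = 0 := by
  exact stmt_8_general a j j' j'' c (fun t ht ↦ (hj' t ht).hasDerivWithinAt)
    (fun t ht ↦ (hj'' t ht).hasDerivWithinAt) (hpos 0 le_rfl) hc heq
    (((isLittleO_one_iff ℝ).2 hlim).trans (isLittleO_const_id_atTop 1)) hlow
end

section
/- Let $E$ be a real inner product space, $a > 0$, let $j : \mathbb{R} \to \mathbb{R}$ be twice differentiable on $[0,\infty)$ with $j(t) > 0$ for all $t \ge 0$, and let $U : \mathbb{R} \to E$ be twice differentiable with $\|U(t)\| = 1$ for all $t$. Suppose $j''(t) = j(t)\,(\|U'(t)\|^2 + a^2)$ for all $t \ge 0$, $\lim_{t \to \infty} j(t) = 0$, and $j(t) \ge j(0)\, e^{-a t}$ for all $t \ge 0$. Then $j(t) = j(0)\, e^{-a t}$ and $U'(t) = 0$ for all $t \ge 0$. -/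
/-!
Both `j` and `v t = j 0 * exp (-a * t)` solve a scalar Jacobi equation: `j` with potential
`‖U'‖² + a²`, `v` with the smaller potential `a²`. Since `0 ≤ v ≤ j`, the difference satisfies
`(j - v)'' = ‖U'‖² j + a² (j - v) ≥ 0`, so it is convex. It starts at `0` and grows sublinearly,
and a sublinear convex function on a half-line is antitone; hence `j = v`. Comparing second
derivatives then forces the potentials to agree.
-/

open Asymptotics Filter Set
open scoped Topology

/-- `u` solves the scalar Jacobi equation `u'' = P u` on `s`. Derivatives are taken within `s`, so
they are one-sided at an endpoint of an interval. -/
def IsJacobiSolutionOn (P u : ℝ → ℝ) (s : Set ℝ) : Prop :=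
  ∃ u' : ℝ → ℝ, (∀ t ∈ s, HasDerivWithinAt u (u' t) s t) ∧
    ∀ t ∈ s, HasDerivWithinAt u' (P t * u t) s t

theorem isJacobiSolutionOn_const_mul_exp (b c : ℝ) (s : Set ℝ) :
    IsJacobiSolutionOn (fun _ ↦ c ^ 2) (fun t ↦ b * Real.exp (c * t)) s := by
  have hasDerivAt_mul_exp (k t : ℝ) :
      HasDerivAt (fun r ↦ k * Real.exp (c * r)) (k * (Real.exp (c * t) * c)) t :=
    ((hasDerivAt_const_mul c).exp).const_mul k
  refine ⟨fun t ↦ b * c * Real.exp (c * t), fun t _ ↦ ?_, fun t _ ↦ ?_⟩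
  · exact ((hasDerivAt_mul_exp b t).congr_deriv (by ring)).hasDerivWithinAt
  · exact ((hasDerivAt_mul_exp (b * c) t).congr_deriv (by ring)).hasDerivWithinAt

theorem antitoneOn_Ici_of_convexOn_of_isLittleO_id {f : ℝ → ℝ} {x₀ : ℝ}
    (hf : ConvexOn ℝ (Ici x₀) f) (hlittle : f =o[atTop] (id : ℝ → ℝ)) :
    AntitoneOn f (Ici x₀) := by
  intro x hx y hy hxy
  rcases hxy.eq_or_lt with rfl | hlt
  · exact le_rfl
  have secant_tendsto : Tendsto (fun s ↦ (f s - f x) / (s - x)) atTop (𝓝 0) := by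
    have hequiv : (fun s ↦ s - x) ~[atTop] (id : ℝ → ℝ) :=
      IsEquivalent.refl.sub_isLittleO (isLittleO_const_id_atTop x)
    exact ((hlittle.sub (isLittleO_const_id_atTop (f x))).trans_isBigO
      hequiv.isBigO_symm).tendsto_div_nhds_zero
  have secant_nonpos : (f y - f x) / (y - x) ≤ 0 := by
    refine ge_of_tendsto secant_tendsto ?_
    filter_upwards [eventually_ge_atTop y] with s hs
    exact hf.secant_mono hx hy (hy.trans hs) hlt.ne' (hlt.trans_le hs).ne' hs
  rwa [div_le_iff₀ (sub_pos.2 hlt), zero_mul, sub_nonpos] at secant_nonpos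

namespace IsJacobiSolutionOn

variable {P Q u v : ℝ → ℝ} {s : Set ℝ} {x₀ : ℝ}

theorem potential_mul_eqOn_of_eqOn (hu : IsJacobiSolutionOn P u s)
    (hv : IsJacobiSolutionOn Q v s) (hs : UniqueDiffOn ℝ s) (huv : EqOn u v s) :
    EqOn (P * u) (Q * v) s := by
  obtain ⟨u', hu', hu''⟩ := hu
  obtain ⟨v', hv', hv''⟩ := hv
  have hderiv : EqOn u' v' s := fun t ht ↦
    (hs t ht).eq_deriv s (hu' t ht) ((hv' t ht).congr_of_mem huv ht)
  exact fun t ht ↦ (hs t ht).eq_deriv s (hu'' t ht) ((hv'' t ht).congr_of_mem hderiv ht)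

theorem convexOn_sub (hu : IsJacobiSolutionOn P u s) (hv : IsJacobiSolutionOn Q v s)
    (hs : Convex ℝ s) (hQ : ∀ t ∈ s, 0 ≤ Q t) (hQP : ∀ t ∈ s, Q t ≤ P t)
    (hu_nonneg : ∀ t ∈ s, 0 ≤ u t) (hvu : ∀ t ∈ s, v t ≤ u t) :
    ConvexOn ℝ s (u - v) := by
  obtain ⟨u', hu', hu''⟩ := hu
  obtain ⟨v', hv', hv''⟩ := hv
  have hsub' (t : ℝ) (ht : t ∈ s) := (hu' t ht).sub (hv' t ht)
  have hsub'' (t : ℝ) (ht : t ∈ s) := (hu'' t ht).sub (hv'' t ht)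
  refine convexOn_of_hasDerivWithinAt2_nonneg hs
    (fun t ht ↦ (hsub' t ht).continuousWithinAt)
    (fun t ht ↦ (hsub' t (interior_subset ht)).mono interior_subset)
    (fun t ht ↦ (hsub'' t (interior_subset ht)).mono interior_subset) fun t ht ↦ ?_
  have hts : t ∈ s := interior_subset ht
  calc
    0 ≤ (P t - Q t) * u t + Q t * (u t - v t) :=
      add_nonneg (mul_nonneg (sub_nonneg.2 (hQP t hts)) (hu_nonneg t hts))
        (mul_nonneg (hQ t hts) (sub_nonneg.2 (hvu t hts)))
    _ = P t * u t - Q t * v t := by ring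

theorem eqOn_Ici_of_le_of_isLittleO_id (hu : IsJacobiSolutionOn P u (Ici x₀))
    (hv : IsJacobiSolutionOn Q v (Ici x₀)) (hQ : ∀ t ∈ Ici x₀, 0 ≤ Q t)
    (hQP : ∀ t ∈ Ici x₀, Q t ≤ P t) (hv_nonneg : ∀ t ∈ Ici x₀, 0 ≤ v t)
    (hvu : ∀ t ∈ Ici x₀, v t ≤ u t) (hstart : u x₀ = v x₀)
    (hlittle : u =o[atTop] (id : ℝ → ℝ)) :
    EqOn u v (Ici x₀) := by
  have hconvex : ConvexOn ℝ (Ici x₀) (u - v) :=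
    hu.convexOn_sub hv (convex_Ici x₀) hQ hQP (fun t ht ↦ (hv_nonneg t ht).trans (hvu t ht)) hvu
  have hdominated : (u - v) =O[atTop] u := by
    refine .of_bound' ?_
    filter_upwards [eventually_ge_atTop x₀] with t ht
    exact abs_le_abs_of_nonneg (sub_nonneg.2 (hvu t ht)) (sub_le_self _ (hv_nonneg t ht))
  have hantitone : AntitoneOn (u - v) (Ici x₀) :=
    antitoneOn_Ici_of_convexOn_of_isLittleO_id hconvex (hdominated.trans_isLittleO hlittle)
  intro t ht
  have hsub_nonpos : u t - v t ≤ u x₀ - v x₀ := hantitone self_mem_Ici ht ht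
  rw [hstart, sub_self, sub_nonpos] at hsub_nonpos
  exact hsub_nonpos.antisymm (hvu t ht)

end IsJacobiSolutionOn

theorem stmt_9_general {a : ℝ} {j q : ℝ → ℝ}
    (hj : IsJacobiSolutionOn (fun t ↦ q t + a ^ 2) j (Ici 0)) (hpos : 0 < j 0)
    (hq : ∀ t, 0 ≤ t → 0 ≤ q t) (hlittle : j =o[atTop] (id : ℝ → ℝ))
    (hlow : ∀ t, 0 ≤ t → j 0 * Real.exp (-a * t) ≤ j t) :
    ∀ t, 0 ≤ t → j t = j 0 * Real.exp (-a * t) ∧ q t = 0 := by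
  have hexp := isJacobiSolutionOn_const_mul_exp (j 0) (-a) (Ici 0)
  rw [neg_sq] at hexp
  have hexp_pos (t : ℝ) : 0 < j 0 * Real.exp (-a * t) := mul_pos hpos (Real.exp_pos _)
  have hj_eq : EqOn j (fun t ↦ j 0 * Real.exp (-a * t)) (Ici 0) :=
    hj.eqOn_Ici_of_le_of_isLittleO_id hexp (fun _ _ ↦ sq_nonneg a)
      (fun t ht ↦ le_add_of_nonneg_left (hq t ht)) (fun t _ ↦ (hexp_pos t).le) hlow
      (by simp) hlittle
  intro t ht
  have hpotential : (q t + a ^ 2) * j t = a ^ 2 * (j 0 * Real.exp (-a * t)) :=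
    hj.potential_mul_eqOn_of_eqOn hexp (uniqueDiffOn_Ici 0) hj_eq ht
  have hjt : j t = j 0 * Real.exp (-a * t) := hj_eq ht
  rw [← hjt] at hpotential
  have hj_ne : j t ≠ 0 := ((hexp_pos t).trans_le (hlow t ht)).ne'
  exact ⟨hjt, add_eq_right.1 (mul_right_cancel₀ hj_ne hpotential)⟩

/-- Rigidity for `J = j • U`: if `j > 0` on `[0,∞)` satisfies the scalar Jacobi equation
`j'' = j (‖U'‖² + a²)`, `j(t) → 0` as `t → ∞`, and `j(t) ≥ j(0) e^{-a t}` on `[0,∞)`,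
then `j(t) = j(0) e^{-a t}` and `U'(t) = 0` for all `t ≥ 0`. -/
theorem stmt_9 {E : Type*} [NormedAddCommGroup E] [InnerProductSpace ℝ E]
    (a : ℝ) (ha : 0 < a) (j j' j'' : ℝ → ℝ) (U U' U'' : ℝ → E)
    (hj' : ∀ t, 0 ≤ t → HasDerivAt j (j' t) t)
    (hj'' : ∀ t, 0 ≤ t → HasDerivAt j' (j'' t) t)
    (hpos : ∀ t, 0 ≤ t → 0 < j t)
    (hU' : ∀ t, HasDerivAt U (U' t) t)
    (hU'' : ∀ t, HasDerivAt U' (U'' t) t)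
    (hnorm : ∀ t, ‖U t‖ = 1)
    (heq : ∀ t, 0 ≤ t → j'' t = j t * (‖U' t‖ ^ 2 + a ^ 2))
    (hlim : Filter.Tendsto j Filter.atTop (nhds 0))
    (hlow : ∀ t, 0 ≤ t → j 0 * Real.exp (-a * t) ≤ j t) :
    ∀ t, 0 ≤ t → j t = j 0 * Real.exp (-a * t) ∧ U' t = 0 := by
  have hj : IsJacobiSolutionOn (fun t ↦ ‖U' t‖ ^ 2 + a ^ 2) j (Ici 0) :=
    ⟨j', fun t ht ↦ (hj' t ht).hasDerivWithinAt, fun t ht ↦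
      ((hj'' t ht).congr_deriv ((heq t ht).trans (mul_comm _ _))).hasDerivWithinAt⟩
  have hlittle : j =o[atTop] (id : ℝ → ℝ) :=
    ((isLittleO_one_iff ℝ).2 hlim).trans (isLittleO_const_id_atTop 1)
  simpa only [sq_eq_zero_iff, norm_eq_zero] using
    stmt_9_general hj (hpos 0 le_rfl) (fun t _ ↦ sq_nonneg ‖U' t‖) hlittle hlow
end
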